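/- Stabilization of belief: let s be a set of clauses, α an objective formula, F a finite set of function terms containing all function terms occurring in s and in α, and k ≥ |F|. Then s ⊨ˢ B_k α if and only if s ⊨ˢ B_{|F|} α. -/

import Mathlib

/-! ## Limited belief: basic syntax and semantics (Schwering 2017, quantifier-free). -/

/-- Standard names (a countably infinite supply). -/
abbrev Name := ℕ

/-- Function terms `f(n₁,…,n_j)`: a function symbol applied to standard names. -/
structure FnTerm where
  sym : ℕ
  args : List Name
deriving DecidableEq, Inhabited

/-- Literals `t ≈ n` (pos) and `t ≉ n` (neg). -/
inductive Lit where
  | pos (t : FnTerm) (n : Name)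
  | neg (t : FnTerm) (n : Name)
deriving DecidableEq

instance : Inhabited Lit := ⟨.pos default 0⟩

/-- The left-hand side (function term) of a literal. -/
def Lit.lhs : Lit → FnTerm
  | .pos t _ => t
  | .neg t _ => t

/-- The right-hand side (standard name) of a literal. -/
def Lit.rhs : Lit → Name
  | .pos _ n => n
  | .neg _ n => n

/-- The negation `¬ℓ` of a literal. -/
def Lit.negate : Lit → Lit
  | .pos t n => .neg t n
  | .neg t n => .pos t n

/-- Names occurring in a literal. -/
def Lit.names (ℓ : Lit) : Finset Name := insert ℓ.rhs ℓ.lhs.args.toFinset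

/-- Two literals are complementary iff they are of the form `t ≈ n` and `t ≉ n`,
or of the form `t ≈ n` and `t ≈ n'` for distinct `n, n'`. -/
def Lit.complementary : Lit → Lit → Bool
  | .pos t n, .neg t' n' => t == t' && n == n'
  | .neg t n, .pos t' n' => t == t' && n == n'
  | .pos t n, .pos t' n' => t == t' && n != n'
  | .neg _ _, .neg _ _ => false

/-- A clause is a (finite) set of literals. -/
abbrev Clause := Finset Lit

/-- Unit propagation of clause `c` with literal `ℓ`: remove from `c` all
literals complementary to `ℓ`. -/
def Clause.prop (c : Clause) (ℓ : Lit) : Clause :=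
  c.filter (fun ℓ' => Lit.complementary ℓ' ℓ = false)

/-- `c₁` subsumes `c₂` iff for every `t ≈ n ∈ c₁`, `t ≈ n ∈ c₂` or `t ≉ n' ∈ c₂`
for some `n' ≠ n`, and for every `t ≉ n ∈ c₁`, `t ≉ n ∈ c₂`. -/
def Clause.subsumes (c₁ c₂ : Clause) : Prop :=
  (∀ t n, Lit.pos t n ∈ c₁ → Lit.pos t n ∈ c₂ ∨ ∃ n', n' ≠ n ∧ Lit.neg t n' ∈ c₂) ∧
  (∀ t n, Lit.neg t n ∈ c₁ → Lit.neg t n ∈ c₂)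

/-- `UP s`: the closure of the set of clauses `s` under unit propagation and
subsumption.  `UP s c` means `c ∈ UP(s)`. -/
inductive UP (s : Set Clause) : Clause → Prop
  | mem {c : Clause} : c ∈ s → UP s c
  | unit {c : Clause} {ℓ : Lit} : UP s {ℓ} → UP s c → UP s (c.prop ℓ)
  | sub {c₁ c₂ : Clause} : UP s c₁ → c₁.subsumes c₂ → UP s c₂

/-- Objective formulas: literals (`atom` is `t ≈ n`, `not atom` is `t ≉ n`),
negation and disjunction. -/
inductive Form where
  | atom (t : FnTerm) (n : Name)
  | not (φ : Form)
  | or (φ ψ : Form)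
deriving DecidableEq

/-- `α ∧ β` abbreviates `¬(¬α ∨ ¬β)`. -/
def Form.and (φ ψ : Form) : Form := .not (.or (.not φ) (.not ψ))

/-- `α → β` abbreviates `¬α ∨ β`. -/
def Form.imp (φ ψ : Form) : Form := .or (.not φ) ψ

/-- A formula is (syntactically) a clause iff it is a disjunction of literals. -/
def Form.isClause : Form → Bool
  | .atom _ _ => true
  | .not (.atom _ _) => true
  | .not _ => false
  | .or φ ψ => φ.isClause && ψ.isClause

/-- The set of literals of a clause-formula. -/
def Form.lits : Form → Clause
  | .atom t n => {Lit.pos t n}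
  | .not (.atom t n) => {Lit.neg t n}
  | .not _ => ∅
  | .or φ ψ => φ.lits ∪ ψ.lits

/-- The limited-belief truth relation `s ⊨ˢ α` for objective formulas:
a clause is true iff it is in `UP(s)`; a non-clause disjunction is true iff one
of its disjuncts is; `¬(α ∨ β)` is true iff `¬α` and `¬β` are; `¬¬α` is true
iff `α` is. -/
def sat (s : Set Clause) : Form → Prop
  | .atom t n => UP s {Lit.pos t n}
  | .not (.atom t n) => UP s {Lit.neg t n}
  | .not (.not φ) => sat s φ
  | .not (.or φ ψ) => sat s (.not φ) ∧ sat s (.not ψ)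
  | .or φ ψ => if (Form.or φ ψ).isClause then UP s (Form.or φ ψ).lits
               else sat s φ ∨ sat s ψ

/-- `satB s k α` is `s ⊨ˢ B_k α`: `B₀ α` holds iff `α` does, and `B_{k+1} α`
holds iff for some function term `t`, for all names `n`,
`s ∪ {t ≈ n} ⊨ˢ B_k α`. -/
def satB (s : Set Clause) : ℕ → Form → Prop
  | 0, φ => sat s φ
  | k+1, φ => ∃ t : FnTerm, ∀ n : Name, satB (s ∪ {({Lit.pos t n} : Clause)}) k φ

/-- A world maps function terms to standard names. -/
abbrev World := FnTerm → Name

/-- Classical truth of a literal in a world. -/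
def Lit.holds (w : World) : Lit → Prop
  | .pos t n => w t = n
  | .neg t n => w t ≠ n

/-- Classical truth of a clause in a world. -/
def Clause.holds (w : World) (c : Clause) : Prop := ∃ ℓ ∈ c, ℓ.holds w

/-- Classical truth of an objective formula in a world. -/
def wsat (w : World) : Form → Prop
  | .atom t n => w t = n
  | .not φ => ¬ wsat w φ
  | .or φ ψ => wsat w φ ∨ wsat w ψ

/-- Classical entailment `s ⊨ α`. -/
def entails (s : Set Clause) (φ : Form) : Prop :=
  ∀ w : World, (∀ c ∈ s, c.holds w) → wsat w φ

/-- Classical entailment of a clause (disjunction of its literals). -/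
def entailsClause (s : Set Clause) (c : Clause) : Prop :=
  ∀ w : World, (∀ c' ∈ s, c'.holds w) → c.holds w

/-- Function terms mentioned in a formula. -/
def Form.terms : Form → Finset FnTerm
  | .atom t _ => {t}
  | .not φ => φ.terms
  | .or φ ψ => φ.terms ∪ ψ.terms

/-- Standard names mentioned in a formula. -/
def Form.names : Form → Finset Name
  | .atom t n => insert n t.args.toFinset
  | .not φ => φ.names
  | .or φ ψ => φ.names ∪ ψ.names

/-!
For `k ≥ |F|`, `B_k α` holds iff `α` holds after adding, for each world `w`, the unit clauses
`t ≈ w(t)` with `t ∈ F`; the latter condition does not mention `k`.  Any number of splits is at most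
as strong as fixing the values of all terms according to a world, while `|F|` splits are enough to
fix the values of the terms in `F`.  Fixing the terms outside `F` gives nothing new about clauses
over `F`: every derivation from these values keeps the invariant that either the part of the
clause over `F` is derivable without them, or `w` satisfies the remaining part.
-/

namespace Lit

variable {ℓ m : Lit} {w : World}

theorem complementary_eq_false_of_lhs_ne (h : ℓ.lhs ≠ m.lhs) : complementary ℓ m = false := by
  cases ℓ <;> cases m <;> simp_all [complementary, lhs]

theorem complementary_eq_false_of_holds (hℓ : ℓ.holds w) (hm : m.holds w) :
    complementary ℓ m = false := by
  cases ℓ <;> cases m <;> simp only [holds] at hℓ hm <;> subst_vars <;> grind [complementary]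

end Lit

namespace Clause

variable {c c₁ c₂ : Clause} {ℓ : Lit} {w : World} {F : Set FnTerm}

@[simp]
theorem holds_singleton : Clause.holds w {ℓ} ↔ ℓ.holds w := by
  simp [holds]

theorem holds_prop (hc : c.holds w) (hℓ : ℓ.holds w) : (c.prop ℓ).holds w := by
  obtain ⟨m, hm, hmw⟩ := hc
  exact ⟨m, Finset.mem_filter.2 ⟨hm, Lit.complementary_eq_false_of_holds hmw hℓ⟩, hmw⟩

theorem holds_of_subsumes (h : c₁.subsumes c₂) (hc : c₁.holds w) : c₂.holds w := by
  obtain ⟨ℓ, hℓ, hw⟩ := hc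
  cases ℓ with
  | pos t n =>
    obtain hpos | ⟨n', hne, hneg⟩ := h.1 t n hℓ
    · exact ⟨_, hpos, hw⟩
    · exact ⟨_, hneg, fun h' => hne (h'.symm.trans hw)⟩
  | neg t n => exact ⟨_, h.2 t n hℓ, hw⟩

theorem empty_subsumes (c : Clause) : Clause.subsumes ∅ c := by
  simp [subsumes]

/-- The clause `c` is over `F`: all function terms occurring in it belong to `F`. -/
def IsOver (c : Clause) (F : Set FnTerm) : Prop := ∀ ℓ ∈ c, ℓ.lhs ∈ F

@[simp]
theorem isOver_singleton : Clause.IsOver {ℓ} F ↔ ℓ.lhs ∈ F := by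
  simp [IsOver]

theorem prop_eq_self (hc : c.IsOver F) (hℓ : ℓ.lhs ∉ F) : c.prop ℓ = c :=
  Finset.filter_true_of_mem fun m hm =>
    Lit.complementary_eq_false_of_lhs_ne fun h => hℓ (h ▸ hc m hm)

open Classical in
/-- The part of the clause `c` over `F`, that is, the literals of `c` whose function term belongs
to `F`.  The part of `c` outside `F` is `c.restrict Fᶜ`. -/
noncomputable def restrict (c : Clause) (F : Set FnTerm) : Clause := c.filter (·.lhs ∈ F)

@[simp]
theorem mem_restrict : ℓ ∈ c.restrict F ↔ ℓ ∈ c ∧ ℓ.lhs ∈ F := by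
  simp [restrict]

theorem isOver_restrict : (c.restrict F).IsOver F := fun _ hℓ => (mem_restrict.1 hℓ).2

theorem restrict_eq_self (hc : c.IsOver F) : c.restrict F = c := by
  classical exact Finset.filter_true_of_mem hc

theorem restrict_eq_empty (hc : c.IsOver Fᶜ) : c.restrict F = ∅ := by
  classical exact Finset.filter_false_of_mem hc

theorem not_holds_restrict_compl (hc : c.IsOver F) : ¬ (c.restrict Fᶜ).holds w :=
  fun ⟨ℓ, hℓ, _⟩ => (mem_restrict.1 hℓ).2 (hc ℓ (mem_restrict.1 hℓ).1)

theorem restrict_prop : (c.prop ℓ).restrict F = (c.restrict F).prop ℓ := by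
  classical exact Finset.filter_comm ..

theorem restrict_subsumes_restrict (h : c₁.subsumes c₂) (F : Set FnTerm) :
    (c₁.restrict F).subsumes (c₂.restrict F) := by
  refine ⟨fun t n hpos => ?_, fun t n hneg => ?_⟩
  · obtain ⟨hmem, ht⟩ := mem_restrict.1 hpos
    exact (h.1 t n hmem).imp (fun hpos' => mem_restrict.2 ⟨hpos', ht⟩)
      fun ⟨n', hne, hneg⟩ => ⟨n', hne, mem_restrict.2 ⟨hneg, ht⟩⟩
  · obtain ⟨hmem, ht⟩ := mem_restrict.1 hneg
    exact mem_restrict.2 ⟨h.2 t n hmem, ht⟩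

end Clause

theorem Form.isOver_lits (α : Form) : α.lits.IsOver α.terms := by
  induction α using Form.lits.induct with
  | case1 t n => simp [lits, terms, Lit.lhs]
  | case2 t n => simp [lits, terms, Lit.lhs]
  | case3 φ h => cases φ <;> simp_all [lits, Clause.IsOver]
  | case4 φ ψ ihφ ihψ =>
    intro ℓ hℓ
    simp only [lits, terms, Finset.mem_union, Finset.mem_coe] at hℓ ⊢
    exact hℓ.imp (ihφ ℓ) (ihψ ℓ)

namespace UP

variable {s s' : Set Clause} {c : Clause} {ℓ : Lit} {w : World} {F : Set FnTerm}

theorem mono (h : s ⊆ s') (hc : UP s c) : UP s' c := by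
  induction hc with
  | mem hc => exact .mem (h hc)
  | unit _ _ ihℓ ihc => exact .unit ihℓ ihc
  | sub _ hsub ih => exact .sub ih hsub

theorem of_empty (h : UP s ∅) (c : Clause) : UP s c :=
  .sub h c.empty_subsumes

theorem restrict_or_holds_prop
    (hℓ : UP s (Clause.restrict {ℓ} F) ∨ (Clause.restrict {ℓ} Fᶜ).holds w)
    (hc : UP s (c.restrict F) ∨ (c.restrict Fᶜ).holds w) :
    UP s ((c.prop ℓ).restrict F) ∨ ((c.prop ℓ).restrict Fᶜ).holds w := by
  simp only [Clause.restrict_prop]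
  by_cases hmem : ℓ.lhs ∈ F
  · have hover : Clause.IsOver {ℓ} F := Clause.isOver_singleton.2 hmem
    have hunit : UP s {ℓ} :=
      Clause.restrict_eq_self hover ▸ hℓ.resolve_right (Clause.not_holds_restrict_compl hover)
    rw [Clause.prop_eq_self (c := c.restrict Fᶜ) Clause.isOver_restrict (not_not_intro hmem)]
    exact hc.imp_left (.unit hunit)
  · have hover : Clause.IsOver {ℓ} Fᶜ := Clause.isOver_singleton.2 hmem
    rw [Clause.restrict_eq_empty hover, Clause.restrict_eq_self hover,
      Clause.holds_singleton] at hℓ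
    rw [Clause.prop_eq_self Clause.isOver_restrict hmem]
    obtain hempty | hholds := hℓ
    · exact .inl (hempty.of_empty _)
    · exact hc.imp_right fun hcw => Clause.holds_prop hcw hholds

theorem restrict_or_holds (hs : ∀ c ∈ s, c.IsOver F)
    (hs' : ∀ c ∈ s', (c.restrict Fᶜ).holds w) (hc : UP (s ∪ s') c) :
    UP s (c.restrict F) ∨ (c.restrict Fᶜ).holds w := by
  induction hc with
  | @mem c hc =>
    refine hc.imp (fun hcs => ?_) (hs' c)
    rw [Clause.restrict_eq_self (hs c hcs)]
    exact .mem hcs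
  | unit _ _ ihℓ ihc => exact restrict_or_holds_prop ihℓ ihc
  | sub _ hsub ih =>
    exact ih.imp (fun h => .sub h (Clause.restrict_subsumes_restrict hsub F))
      (Clause.holds_of_subsumes (Clause.restrict_subsumes_restrict hsub Fᶜ))

theorem of_union_of_holds (hs : ∀ c ∈ s, c.IsOver F) (hs' : ∀ c ∈ s', (c.restrict Fᶜ).holds w)
    (hcF : c.IsOver F) (hc : UP (s ∪ s') c) : UP s c := by
  rw [← Clause.restrict_eq_self hcF]
  exact (restrict_or_holds hs hs' hc).resolve_right (Clause.not_holds_restrict_compl hcF)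

end UP

section Sat

variable {s s' : Set Clause} {α : Form} {F : Set FnTerm}

theorem sat_of_forall_UP (h : ∀ c : Clause, c.IsOver F → UP s c → UP s' c)
    (hα : ↑α.terms ⊆ F) (hs : sat s α) : sat s' α := by
  induction α using sat.induct with
  | case1 t n =>
    simp only [sat] at hs ⊢
    exact h _ (by simpa [Form.terms, Lit.lhs] using hα) hs
  | case2 t n =>
    simp only [sat] at hs ⊢
    exact h _ (by simpa [Form.terms, Lit.lhs] using hα) hs
  | case3 φ ih =>
    simp only [sat] at hs ⊢
    exact ih hα hs
  | case4 φ ψ ihφ ihψ =>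
    simp only [Form.terms, Finset.coe_union, Set.union_subset_iff] at hα
    simp only [sat] at hs ⊢
    exact hs.imp (ihφ hα.1) (ihψ hα.2)
  | case5 φ ψ hclause =>
    rw [sat, if_pos hclause] at hs ⊢
    exact h _ (fun ℓ hℓ => hα (Form.isOver_lits _ ℓ hℓ)) hs
  | case6 φ ψ hclause ihφ ihψ =>
    simp only [Form.terms, Finset.coe_union, Set.union_subset_iff] at hα
    rw [sat, if_neg hclause] at hs ⊢
    exact hs.imp (ihφ hα.1) (ihψ hα.2)

theorem sat_mono (h : s ⊆ s') (hs : sat s α) : sat s' α :=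
  sat_of_forall_UP (fun _ _ => UP.mono h) subset_rfl hs

theorem satB_succ {k : ℕ} (h : satB s k α) : satB s (k + 1) α := by
  induction k generalizing s with
  | zero => exact ⟨default, fun _ => sat_mono Set.subset_union_left h⟩
  | succ k ih =>
    obtain ⟨t, ht⟩ := h
    exact ⟨t, fun n => ih (ht n)⟩

theorem satB_monotone (s : Set Clause) (α : Form) : Monotone (satB s · α) :=
  monotone_nat_of_le_succ fun _ => satB_succ

end Sat

/-- The set of unit clauses `t ≈ w(t)` for `t ∈ T`, describing the world `w` on the terms `T`. -/
def worldUnits (w : World) (T : Set FnTerm) : Set Clause :=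
  (fun t => {Lit.pos t (w t)}) '' T

section WorldUnits

variable {s : Set Clause} {α : Form} {w : World} {T : Set FnTerm} {c : Clause}

theorem isOver_of_mem_worldUnits (hc : c ∈ worldUnits w T) : c.IsOver T := by
  obtain ⟨t, ht, rfl⟩ := hc
  exact Clause.isOver_singleton.2 ht

theorem holds_of_mem_worldUnits (hc : c ∈ worldUnits w T) : c.holds w := by
  obtain ⟨t, -, rfl⟩ := hc
  exact Clause.holds_singleton.2 rfl

theorem worldUnits_update_insert {t : FnTerm} (ht : t ∉ T) (n : Name) :
    worldUnits (Function.update w t n) (insert t T) = {{Lit.pos t n}} ∪ worldUnits w T := by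
  rw [worldUnits, Set.image_insert_eq, Function.update_self, Set.insert_eq]
  congr 1
  refine Set.image_congr fun u hu => ?_
  rw [Function.update_of_ne (ne_of_mem_of_not_mem hu ht)]

theorem sat_union_worldUnits_of_univ (hs : ∀ c ∈ s, c.IsOver T) (hα : ↑α.terms ⊆ T)
    (h : sat (s ∪ worldUnits w Set.univ) α) : sat (s ∪ worldUnits w T) α := by
  have hsplit : s ∪ worldUnits w Set.univ = s ∪ worldUnits w T ∪ worldUnits w Tᶜ := by
    rw [Set.union_assoc, worldUnits, worldUnits, worldUnits, ← Set.image_union,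
      Set.union_compl_self]
  have hover : ∀ c ∈ s ∪ worldUnits w T, c.IsOver T := fun c hc =>
    hc.elim (hs c) isOver_of_mem_worldUnits
  have houtside : ∀ c ∈ worldUnits w Tᶜ, (c.restrict Tᶜ).holds w := fun c hc => by
    rw [Clause.restrict_eq_self (isOver_of_mem_worldUnits hc)]
    exact holds_of_mem_worldUnits hc
  rw [hsplit] at h
  exact sat_of_forall_UP (fun _ => UP.of_union_of_holds hover houtside) hα h

theorem sat_union_worldUnits_univ_of_satB {k : ℕ} (h : satB s k α) (w : World) :
    sat (s ∪ worldUnits w Set.univ) α := by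
  induction k generalizing s with
  | zero => exact sat_mono Set.subset_union_left h
  | succ k ih =>
    obtain ⟨t, ht⟩ := h
    have hmem : {Lit.pos t (w t)} ∈ worldUnits w Set.univ := ⟨t, trivial, rfl⟩
    have hw := ih (ht (w t))
    rwa [Set.union_assoc, Set.singleton_union, Set.insert_eq_of_mem hmem] at hw

theorem satB_card_of_forall_world {F : Finset FnTerm}
    (h : ∀ w, sat (s ∪ worldUnits w F) α) : satB s F.card α := by
  induction F using Finset.induction_on generalizing s with
  | empty => simpa [worldUnits, satB] using h
  | insert t F ht ih =>
    rw [Finset.card_insert_of_notMem ht]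
    refine ⟨t, fun n => ih fun w => ?_⟩
    have hw := h (Function.update w t n)
    rwa [Finset.coe_insert, worldUnits_update_insert ht, ← Set.union_assoc] at hw

theorem satB_iff_forall_world {F : Finset FnTerm} {k : ℕ} (hs : ∀ c ∈ s, c.IsOver F)
    (hα : α.terms ⊆ F) (hk : F.card ≤ k) :
    satB s k α ↔ ∀ w, sat (s ∪ worldUnits w F) α where
  mp h w := sat_union_worldUnits_of_univ hs (Finset.coe_subset.2 hα)
    (sat_union_worldUnits_univ_of_satB h w)
  mpr h := satB_monotone s α hk (satB_card_of_forall_world h)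

end WorldUnits

/-- **Stabilization of belief** (Lemma 2): if `F` contains all function terms
occurring in `s` and `α` and `k ≥ |F|`, then `s ⊨ˢ B_k α` iff `s ⊨ˢ B_{|F|} α`. -/
theorem belief_level_stable (s : Set Clause) (α : Form) (F : Finset FnTerm)
    (hsF : ∀ c ∈ s, ∀ ℓ ∈ c, Lit.lhs ℓ ∈ F) (hαF : α.terms ⊆ F)
    (k : ℕ) (hk : F.card ≤ k) :
    satB s k α ↔ satB s F.card α := by
  rw [satB_iff_forall_world hsF hαF hk, satB_iff_forall_world hsF hαF le_rfl]
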